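/- For every real z > 0, e^{z−1} − z² + z·ln z ≥ 0. -/

import Mathlib

/-!
On `y > 0`, the convex conjugate of `exp` is `y * log y - y`. The claim is the resulting
Fenchel–Young inequality `x * y ≤ exp x + y * log y - y` at the point `x = z - 1`, `y = z`.
-/

theorem mul_le_exp_add_mul_log_sub (x : ℝ) {y : ℝ} (hy : 0 < y) :
    x * y ≤ Real.exp x + y * Real.log y - y := by
  -- The tangent line of `exp` at `log y`, where its slope is `y`.
  have tangent_le_exp : y * (x - Real.log y + 1) ≤ Real.exp x :=
    calc
      y * (x - Real.log y + 1) ≤ y * Real.exp (x - Real.log y) := by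
        gcongr
        exact Real.add_one_le_exp _
      _ = Real.exp x := by rw [Real.exp_sub, Real.exp_log hy, mul_div_cancel₀ _ hy.ne']
  linarith

theorem exp_sub_sq_add_log_nonneg (z : ℝ) (hz : 0 < z) :
    Real.exp (z - 1) - z ^ 2 + z * Real.log z ≥ 0 := by
  have fenchel_young : (z - 1) * z ≤ Real.exp (z - 1) + z * Real.log z - z :=
    mul_le_exp_add_mul_log_sub (z - 1) hz
  linarith
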